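/- Let g ∈ C_0^∞(ℝ) and let g̃ be an almost holomorphic extension of g. Then for every compact set K ⊂ ℂ such that {Re z : z ∈ K} is disjoint from supp g, and for every N ∈ ℕ, there is a constant C with |g̃(z)| ≤ C|Im z|^N for all z ∈ K. -/

import Mathlib

open MeasureTheory Complex

noncomputable section

/-- The Cauchy–Riemann operator `∂F/∂z̄ = (∂F/∂x + i ∂F/∂y)/2`. -/
def dbar (F : ℂ → ℂ) (z : ℂ) : ℂ :=
  (fderiv ℝ F z 1 + Complex.I * fderiv ℝ F z Complex.I) / 2

/-- `F` is an almost holomorphic extension of `f ∈ C_0^∞(ℝ)`. -/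
def IsAHExt (f : ℝ → ℂ) (F : ℂ → ℂ) : Prop :=
  ContDiff ℝ (⊤ : ℕ∞) F ∧ HasCompactSupport F ∧ (∀ x : ℝ, F x = f x) ∧
    ∀ N : ℕ, ∃ C : ℝ, ∀ z : ℂ, ‖dbar F z‖ ≤ C * |z.im| ^ N

/-- Horizontal derivative. -/
def dx (F : ℂ → ℂ) (z : ℂ) : ℂ := fderiv ℝ F z 1

lemma dx_contDiff {F : ℂ → ℂ} (hF : ContDiff ℝ (⊤ : ℕ∞) F) : ContDiff ℝ (⊤ : ℕ∞) (dx F) :=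
  (hF.fderiv_right (m := ((⊤ : ℕ∞) : WithTop ℕ∞)) (by simp)).clm_apply contDiff_const

lemma dbar_contDiff {F : ℂ → ℂ} (hF : ContDiff ℝ (⊤ : ℕ∞) F) : ContDiff ℝ (⊤ : ℕ∞) (dbar F) := by
  have h := hF.fderiv_right (m := ((⊤ : ℕ∞) : WithTop ℕ∞)) (by simp)
  exact ((h.clm_apply contDiff_const).add
    (contDiff_const.mul (h.clm_apply contDiff_const))).div_const 2

lemma dx_supp {F : ℂ → ℂ} (hF : HasCompactSupport F) : HasCompactSupport (dx F) :=
  hF.fderiv_apply ℝ 1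

lemma dbar_supp {F : ℂ → ℂ} (hF : HasCompactSupport F) : HasCompactSupport (dbar F) := by
  refine (hF.fderiv (𝕜 := ℝ)).mono' ?_
  intro z hz
  apply subset_tsupport
  intro h
  apply hz
  simp [dbar, h]

lemma dbar_dx {F : ℂ → ℂ} (hF : ContDiff ℝ (⊤ : ℕ∞) F) (z : ℂ) :
    dbar (dx F) z = dx (dbar F) z := by
  have h := hF.fderiv_right (m := ((⊤ : ℕ∞) : WithTop ℕ∞)) (by simp)
  have hd : DifferentiableAt ℝ (fderiv ℝ F) z := (h.differentiable (by simp)) z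
  have key : ∀ v w : ℂ, fderiv ℝ (fun u => fderiv ℝ F u v) z w = fderiv ℝ (fderiv ℝ F) z w v := by
    intro v w
    rw [fderiv_clm_apply hd (by fun_prop)]
    simp
  have hda : ∀ v : ℂ, DifferentiableAt ℝ (fun u => fderiv ℝ F u v) z := fun v =>
    hd.clm_apply (by fun_prop)
  have sym : fderiv ℝ (fderiv ℝ F) z 1 I = fderiv ℝ (fderiv ℝ F) z I 1 :=
    (hF.contDiffAt.isSymmSndFDerivAt (by simpa using (WithTop.coe_le_coe.2 (le_top : (2 : ℕ∞) ≤ ⊤)))) 1 I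
  have e1 : HasFDerivAt (dbar F) ((2 : ℂ)⁻¹ • (fderiv ℝ (fun u => fderiv ℝ F u 1) z +
      I • fderiv ℝ (fun u => fderiv ℝ F u I) z)) z := by
    have := (((hda 1).hasFDerivAt.add ((hda I).hasFDerivAt.const_smul I)).const_smul (2 : ℂ)⁻¹)
    refine this.congr_of_eventuallyEq (Filter.Eventually.of_forall fun u => ?_)
    simp [dbar]; ring
  have e2 : dx (dbar F) z = _ := congrArg (fun L => L 1) e1.fderiv
  rw [e2]
  simp only [dbar]
  change (fderiv ℝ (fun u => fderiv ℝ F u 1) z 1 + I * fderiv ℝ (fun u => fderiv ℝ F u 1) z I) / 2 = _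
  simp [key, sym]
  ring

/-- Vanishing to infinite order at the real axis. -/
def Flat (E : ℂ → ℂ) : Prop := ∀ N : ℕ, ∃ C : ℝ, ∀ z : ℂ, ‖E z‖ ≤ C * |z.im| ^ N

lemma hline {E : ℂ → ℂ} (hE : ContDiff ℝ (⊤ : ℕ∞) E) (z v : ℂ) (t : ℝ) :
    HasDerivAt (fun t : ℝ => E (z + t * v)) (fderiv ℝ E (z + t * v) v) t := by
  have h1 : HasDerivAt (fun t : ℝ => z + t * v) v t := by
    simpa using ((Complex.ofRealCLM.hasDerivAt (x := t)).mul_const v).const_add z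
  exact ((hE.differentiable (by simp)) (z + t * v)).hasFDerivAt.comp_hasDerivAt t h1

lemma flat_dx {E : ℂ → ℂ} (hE : ContDiff ℝ (⊤ : ℕ∞) E) (hs : HasCompactSupport E)
    (hf : Flat E) : Flat (dx E) := by
  intro N
  obtain ⟨C, hC⟩ := hf (2 * N)
  obtain ⟨M, hM⟩ := ((dx_contDiff hE).of_le (m := 1) (by exact_mod_cast le_top)).lipschitzWith_of_hasCompactSupport
    (dx_supp hs) (by simp)
  have main : ∀ z : ℂ, ∀ h : ℝ, 0 < h →
      h * ‖dx E z‖ ≤ 2 * (C * |z.im| ^ (2 * N)) + M * h * h := by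
    intro z h hh
    have hder : ∀ t ∈ Set.Icc (0 : ℝ) h, HasDerivWithinAt
        (fun t : ℝ => E (z + t * 1) - t * dx E z) (dx E (z + t * 1) - dx E z) (Set.Icc 0 h) t := by
      intro t _
      have h2 : HasDerivAt (fun t : ℝ => (t : ℂ) * dx E z) (dx E z) t := by
        simpa using (Complex.ofRealCLM.hasDerivAt (x := t)).mul_const (dx E z)
      exact ((hline hE z 1 t).sub h2).hasDerivWithinAt
    have hb := norm_image_sub_le_of_norm_deriv_le_segment' hder (C := M * h) (by
      intro t ht
      have := hM.dist_le_mul (z + t * 1) z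
      rw [dist_eq_norm, dist_eq_norm] at this
      refine this.trans ?_
      have : ‖z + t * 1 - z‖ = t := by simp [abs_of_nonneg ht.1]
      rw [this]
      exact mul_le_mul_of_nonneg_left ht.2.le M.2) h (Set.right_mem_Icc.2 hh.le)
    have a1 := hC z
    have a2 := hC (z + h * 1)
    have e : (z + h * 1).im = z.im := by simp
    rw [e] at a2
    have e3 : (h : ℂ) * dx E z = E (z + h * 1) - E z -
        ((E (z + h * 1) - h * dx E z) - (E (z + (0 : ℝ) * 1) - (0 : ℝ) * dx E z)) := by
      simp
    have e4 : h * ‖dx E z‖ = ‖(h : ℂ) * dx E z‖ := by simp [abs_of_pos hh]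
    rw [e4, e3]
    refine (norm_sub_le _ _).trans ?_
    have := norm_sub_le (E (z + h * 1)) (E z)
    simp only [sub_zero] at hb
    linarith
  refine ⟨2 * C + M, fun z => ?_⟩
  have hp : 0 ≤ |z.im| ^ N := by positivity
  rcases hp.eq_or_lt with h0 | h0
  · rw [← h0, mul_zero]
    refine le_of_forall_pos_le_add fun ε hε => ?_
    have hM1 : (0 : ℝ) < M + 1 := by positivity
    have hq : 0 < ε / (M + 1) := by positivity
    have := main z _ hq
    rw [mul_comm 2 N, pow_mul, ← h0] at this
    have h3 : ‖dx E z‖ ≤ M * (ε / (M + 1)) := by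
      refine le_of_mul_le_mul_left ?_ hq
      linarith
    have h4 : (M : ℝ) * (ε / (M + 1)) ≤ (M + 1) * (ε / (M + 1)) := by gcongr; linarith
    rw [mul_div_cancel₀ _ hM1.ne'] at h4
    linarith
  · have := main z _ h0
    rw [mul_comm 2 N, pow_mul] at this
    refine le_of_mul_le_mul_left ?_ h0
    linarith

lemma small_induct (S : Set ℝ) (hS : IsOpen S) (n : ℕ) : ∀ F : ℂ → ℂ, ContDiff ℝ (⊤ : ℕ∞) F →
    HasCompactSupport F → (∀ x ∈ S, F (x : ℝ) = 0) → Flat (dbar F) →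
    ∃ C : ℝ, ∀ z : ℂ, z.re ∈ S → ‖F z‖ ≤ C * |z.im| ^ n := by
  induction n with
  | zero =>
    intro F hF hs _ _
    obtain ⟨C, hC⟩ := hF.continuous.bounded_above_of_compact_support hs
    exact ⟨C, fun z _ => by simpa using hC z⟩
  | succ n ih =>
    intro F hF hs h0 hfl
    have hx0 : ∀ x ∈ S, dx F (x : ℝ) = 0 := by
      intro x hx
      have h1 := hline hF 0 1 x
      have h2 : (fun t : ℝ => F (0 + t * 1)) =ᶠ[nhds x] fun _ => 0 := by
        filter_upwards [hS.mem_nhds hx] with t ht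
        simpa using h0 t ht
      have h3 := h1.unique ((hasDerivAt_const x (0 : ℂ)).congr_of_eventuallyEq h2)
      simpa [dx] using h3
    have hfl' : Flat (dbar (dx F)) := by
      have : dbar (dx F) = dx (dbar F) := funext (dbar_dx hF)
      rw [this]
      exact flat_dx (dbar_contDiff hF) (dbar_supp hs) hfl
    obtain ⟨A, hA⟩ := ih (dx F) (dx_contDiff hF) (dx_supp hs) hx0 hfl'
    obtain ⟨B, hB⟩ := hfl n
    have hy : ∀ z : ℂ, z.re ∈ S → ‖fderiv ℝ F z I‖ ≤ (|A| + 2 * |B|) * |z.im| ^ n := by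
      intro z hz
      have e : fderiv ℝ F z I = I * dx F z - 2 * I * dbar F z := by
        simp only [dx, dbar]
        linear_combination (fderiv ℝ F z I) * I_mul_I
      rw [e]
      refine (norm_sub_le _ _).trans ?_
      have a := hA z hz
      have b := hB z
      simp only [norm_mul, norm_I, one_mul, mul_one, Complex.norm_ofNat]
      have hp : 0 ≤ |z.im| ^ n := by positivity
      have a' := mul_le_mul_of_nonneg_right (le_abs_self A) hp
      have b' := mul_le_mul_of_nonneg_right (le_abs_self B) hp
      linarith
    refine ⟨|A| + 2 * |B|, fun z hz => ?_⟩
    have mv := (convex_uIcc (0 : ℝ) z.im).norm_image_sub_le_of_norm_hasDerivWithin_le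
      (f := fun t : ℝ => F ((z.re : ℂ) + t * I)) (C := (|A| + 2 * |B|) * |z.im| ^ n)
      (fun t _ => (hline hF z.re I t).hasDerivWithinAt) (by
        intro t ht
        refine (hy _ (by simpa using hz)).trans ?_
        have : |t| ≤ |z.im| := by
          have := Set.abs_sub_left_of_mem_uIcc ht
          simpa using this
        simp only [add_im, ofReal_im, mul_im, ofReal_re, I_im, I_re, mul_one, mul_zero, zero_add,
          add_zero]
        gcongr) Set.left_mem_uIcc Set.right_mem_uIcc
    have hz0 := h0 _ hz
    simp only [re_add_im, ofReal_zero, zero_mul, add_zero, hz0, sub_zero, Real.norm_eq_abs] at mv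
    rw [pow_succ, ← mul_assoc]
    exact mv

/-- (2.4): any almost holomorphic extension `g̃` of `g ∈ C_0^∞(ℝ)` is
`O(|Im z|^N)` for every `N`, locally uniformly where `Re z ∉ supp g`. -/
theorem ahext_small_off_support (g : ℝ → ℂ)
    (hg_smooth : ContDiff ℝ (⊤ : ℕ∞) g) (hg_supp : HasCompactSupport g)
    (G : ℂ → ℂ) (hG : IsAHExt g G)
    (K : Set ℂ) (hK : IsCompact K)
    (hdisj : ∀ z ∈ K, z.re ∉ tsupport g)
    (N : ℕ) :
    ∃ C : ℝ, ∀ z ∈ K, ‖G z‖ ≤ C * |z.im| ^ N := by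
  obtain ⟨h1, h2, h3, h4⟩ := hG
  obtain ⟨C, hC⟩ := small_induct (tsupport g)ᶜ (isClosed_tsupport g).isOpen_compl N G h1 h2
    (fun x hx => by rw [h3]; exact image_eq_zero_of_notMem_tsupport hx) h4
  exact ⟨C, fun z hz => hC z (hdisj z hz)⟩
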